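/- arXiv:math-ph/9811005 — 3 statements merged into one kernel-verified Lean document; each statement's English description precedes it below -/
import Mathlib

section
/- Let A be a (possibly noncommutative) complex algebra with unit 1, let p, a ∈ A with p² = p, and let z ∈ ℂ (identified with z·1). Suppose that a − z and p·a·p − z are both invertible in A. Then p·(p·a·p − z)⁻¹ − (a − z)⁻¹ = (p·a·p − z)⁻¹ · p · a · (1 − p) · (a − z)⁻¹ − (1 − p) · (a − z)⁻¹. -/
/-!
The second resolvent identity `x⁻¹ - y⁻¹ = x⁻¹ (y - x) y⁻¹` survives inserting an element `p`:
`x⁻¹ p - p y⁻¹ = x⁻¹ (p y - x p) y⁻¹`. For `x = p a p - z` and `y = a - z` the middle factor is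
`p a (1 - p)`, and `x⁻¹ p = p x⁻¹` because `p` commutes with its own compression.
-/

theorem commute_ringInverse_right {M : Type*} [MonoidWithZero M] {p x : M} (h : Commute p x) :
    Commute p (Ring.inverse x) := by
  by_cases hx : IsUnit x
  · obtain ⟨u, rfl⟩ := hx
    simpa only [Ring.inverse_unit] using h.units_inv_right
  · simpa only [Ring.inverse_non_unit x hx] using Commute.zero_right p

section

variable {A : Type*} [Ring A] {p c x y : A}

theorem ringInverse_mul_sub_mul_ringInverse (p : A) (hx : IsUnit x) (hy : IsUnit y) :
    Ring.inverse x * p - p * Ring.inverse y =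
      Ring.inverse x * (p * y - x * p) * Ring.inverse y := by
  rw [mul_sub, sub_mul, ← mul_assoc, Ring.mul_inverse_cancel_right _ _ hy,
    Ring.inverse_mul_cancel_left _ _ hx]

theorem commute_compression_sub (hp : IsIdempotentElem p) (hc : Commute p c) (a : A) :
    Commute p (p * a * p - c) := by
  refine Commute.sub_right ?_ hc
  calc p * (p * a * p) = p * a * p := by rw [mul_assoc p a p, hp.mul_self_mul]
    _ = p * a * p * p := (hp.mul_mul_self (p * a)).symm

theorem mul_sub_sub_compression_sub_mul (hp : IsIdempotentElem p) (hc : Commute p c) (a : A) :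
    p * (a - c) - (p * a * p - c) * p = p * a * (1 - p) := by
  rw [mul_sub, sub_mul, hp.mul_mul_self, hc.eq, sub_sub_sub_cancel_right, mul_one_sub]

theorem resolvent_compression_identity_general (a : A) (hp : IsIdempotentElem p)
    (hc : Commute p c) (ha : IsUnit (a - c)) (hpap : IsUnit (p * a * p - c)) :
    p * Ring.inverse (p * a * p - c) - Ring.inverse (a - c) =
      Ring.inverse (p * a * p - c) * p * a * (1 - p) * Ring.inverse (a - c) -
        (1 - p) * Ring.inverse (a - c) := by
  have hcomm : p * Ring.inverse (p * a * p - c) = Ring.inverse (p * a * p - c) * p :=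
    commute_ringInverse_right (commute_compression_sub hp hc a)
  have hdiff : Ring.inverse (p * a * p - c) * p - p * Ring.inverse (a - c) =
      Ring.inverse (p * a * p - c) * p * a * (1 - p) * Ring.inverse (a - c) := by
    rw [ringInverse_mul_sub_mul_ringInverse p hpap ha, mul_sub_sub_compression_sub_mul hp hc]
    simp only [mul_assoc]
  rw [← hdiff, hcomm, one_sub_mul, sub_sub_sub_cancel_right]

end

/-- The resolvent comparison identity between an element `a` and its compression `p * a * p`
by an idempotent `p`, in a complex unital algebra. -/
theorem resolvent_compression_identity
    {A : Type*} [Ring A] [Algebra ℂ A] (p a : A) (z : ℂ) (hp : p * p = p)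
    (ha : IsUnit (a - algebraMap ℂ A z))
    (hpap : IsUnit (p * a * p - algebraMap ℂ A z)) :
    p * Ring.inverse (p * a * p - algebraMap ℂ A z) - Ring.inverse (a - algebraMap ℂ A z)
      = Ring.inverse (p * a * p - algebraMap ℂ A z) * p * a * (1 - p) *
          Ring.inverse (a - algebraMap ℂ A z)
        - (1 - p) * Ring.inverse (a - algebraMap ℂ A z) := by
  exact resolvent_compression_identity_general a hp (Algebra.commutes z p).symm ha hpap
end

section
/- Let H be a complex Hilbert space, let A : H → H be a bounded self-adjoint operator, let P : H → H be an orthogonal projection (P² = P and P self-adjoint), and let ω be a nonzero real number. Then the operators A − iω·I and P∘A∘P − iω·I are invertible as bounded operators on H, and ‖P ∘ (P∘A∘P − iω·I)⁻¹ − (A − iω·I)⁻¹‖ ≤ (1 + ‖P∘A∘(I − P)‖/|ω|) · ‖(I − P) ∘ (A − iω·I)⁻¹‖, where ‖·‖ denotes the operator norm and I the identity operator. -/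
/-!
For a self-adjoint `a` the functional calculus gives `‖(a - z)⁻¹‖ ≤ 1 / |Im z|`, because the
spectrum is real. Write `t = a - z` and `d = p a p - z`. Since `p` commutes with `d`,
`p d⁻¹ - t⁻¹ = d⁻¹ (p t - d p) t⁻¹ - (1 - p) t⁻¹`, and idempotence of `p` turns `p t - d p` into
`(p a (1 - p)) (1 - p)`. Both terms thus carry the factor `(1 - p) t⁻¹`, and the bound
`‖d⁻¹‖ ≤ 1 / |Im z|` finishes the estimate.
-/

section Compression

theorem commute_mul_mul_self_of_isIdempotentElem {S : Type*} [Semigroup S] {p : S}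
    (hp : IsIdempotentElem p) (a : S) : Commute p (p * a * p) := by
  rw [commute_iff_eq, mul_assoc (p * a), hp.eq, ← mul_assoc, ← mul_assoc, hp.eq]

theorem mul_inverse_sub_inverse_eq_of_commute {R : Type*} [Ring R] {p d t : R}
    (hd : IsUnit d) (ht : IsUnit t) (hpd : Commute p d) :
    p * Ring.inverse d - Ring.inverse t =
      Ring.inverse d * (p * t - d * p) * Ring.inverse t - (1 - p) * Ring.inverse t := by
  lift d to Rˣ using hd
  lift t to Rˣ using ht
  have hp_inv : p * ↑d⁻¹ = ↑d⁻¹ * p := hpd.units_inv_right.eq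
  simp only [Ring.inverse_unit, mul_sub, sub_mul, one_mul, ← mul_assoc, Units.inv_mul,
    Units.mul_inv_cancel_right, hp_inv]
  abel

section Algebra

variable {𝕜 R : Type*} [CommSemiring 𝕜] [Ring R] [Algebra 𝕜 R] {p : R}

theorem mul_sub_smul_one_sub_compression_mul (hp : IsIdempotentElem p) (a : R) (z : 𝕜) :
    p * (a - z • 1) - (p * a * p - z • 1) * p = p * a * (1 - p) * (1 - p) := by
  rw [mul_assoc (p * a) (1 - p), hp.one_sub.eq]
  simp only [mul_sub, sub_mul, mul_smul_comm, smul_mul_assoc, mul_one, one_mul,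
    mul_assoc (p * a) p p, hp.eq]
  abel

theorem mul_inverse_compression_sub_inverse_eq (hp : IsIdempotentElem p) {a : R} {z : 𝕜}
    (ha : IsUnit (a - z • (1 : R))) (hpa : IsUnit (p * a * p - z • (1 : R))) :
    p * Ring.inverse (p * a * p - z • (1 : R)) - Ring.inverse (a - z • (1 : R)) =
      Ring.inverse (p * a * p - z • (1 : R)) * (p * a * (1 - p)) *
          ((1 - p) * Ring.inverse (a - z • (1 : R))) -
        (1 - p) * Ring.inverse (a - z • (1 : R)) := by
  have hcomm : Commute p (p * a * p - z • (1 : R)) :=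
    (commute_mul_mul_self_of_isIdempotentElem hp a).sub_right ((Commute.one_right p).smul_right z)
  rw [mul_inverse_sub_inverse_eq_of_commute hpa ha hcomm,
    mul_sub_smul_one_sub_compression_mul hp]
  simp only [mul_assoc]

end Algebra

theorem norm_mul_inverse_compression_sub_inverse_le {𝕜 R : Type*} [CommSemiring 𝕜] [NormedRing R]
    [Algebra 𝕜 R] {p a : R} (hp : IsIdempotentElem p) {z : 𝕜}
    (ha : IsUnit (a - z • (1 : R))) (hpa : IsUnit (p * a * p - z • (1 : R))) :
    ‖p * Ring.inverse (p * a * p - z • (1 : R)) - Ring.inverse (a - z • (1 : R))‖ ≤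
      (1 + ‖Ring.inverse (p * a * p - z • (1 : R))‖ * ‖p * a * (1 - p)‖) *
        ‖(1 - p) * Ring.inverse (a - z • (1 : R))‖ := by
  rw [mul_inverse_compression_sub_inverse_eq hp ha hpa]
  set s := Ring.inverse (p * a * p - z • (1 : R))
  set q := (1 - p) * Ring.inverse (a - z • (1 : R))
  calc ‖s * (p * a * (1 - p)) * q - q‖
      ≤ ‖s * (p * a * (1 - p)) * q‖ + ‖q‖ := norm_sub_le _ _
    _ ≤ ‖s‖ * ‖p * a * (1 - p)‖ * ‖q‖ + ‖q‖ := by gcongr; exact norm_mul₃_le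
    _ = (1 + ‖s‖ * ‖p * a * (1 - p)‖) * ‖q‖ := by ring

end Compression

section CStarAlgebra

variable {𝒜 : Type*} [CStarAlgebra 𝒜] {a : 𝒜} {z : ℂ}

theorem inverse_sub_smul_one_eq_cfc [IsStarNormal a] (hz : z ∉ spectrum ℂ a) :
    Ring.inverse (a - z • (1 : 𝒜)) = cfc (fun w : ℂ ↦ (w - z)⁻¹) a := by
  have hne : ∀ w ∈ spectrum ℂ a, w - z ≠ 0 := fun w hw ↦
    sub_ne_zero.mpr (ne_of_mem_of_not_mem hw hz)
  rw [cfc_inv (fun w : ℂ ↦ w - z) a hne, cfc_sub (fun w : ℂ ↦ w) (fun _ ↦ z) a, cfc_id' ℂ a,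
    cfc_const z a, Algebra.algebraMap_eq_smul_one]

theorem norm_inverse_sub_smul_one_le [IsStarNormal a] {δ : ℝ} (hδ : 0 < δ)
    (hdist : ∀ w ∈ spectrum ℂ a, δ ≤ ‖w - z‖) :
    ‖Ring.inverse (a - z • (1 : 𝒜))‖ ≤ δ⁻¹ := by
  have hz : z ∉ spectrum ℂ a := fun hz ↦ hδ.not_ge (by simpa using hdist z hz)
  rw [inverse_sub_smul_one_eq_cfc hz]
  refine norm_cfc_le (inv_nonneg.mpr hδ.le) fun w hw ↦ ?_
  rw [norm_inv]
  exact inv_anti₀ hδ (hdist w hw)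

theorem isUnit_sub_smul_one_of_isSelfAdjoint (ha : IsSelfAdjoint a) (hz : z.im ≠ 0) :
    IsUnit (a - z • (1 : 𝒜)) := by
  have hmem : z ∉ spectrum ℂ a := fun h ↦ hz (ha.im_eq_zero_of_mem_spectrum h)
  rwa [spectrum.notMem_iff, ← IsUnit.neg_iff, neg_sub, Algebra.algebraMap_eq_smul_one] at hmem

theorem norm_inverse_sub_smul_one_le_of_isSelfAdjoint (ha : IsSelfAdjoint a) (hz : z.im ≠ 0) :
    ‖Ring.inverse (a - z • (1 : 𝒜))‖ ≤ |z.im|⁻¹ := by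
  have := ha.isStarNormal
  refine norm_inverse_sub_smul_one_le (abs_pos.mpr hz) fun w hw ↦ ?_
  simpa [ha.im_eq_zero_of_mem_spectrum hw] using Complex.abs_im_le_norm (w - z)

theorem compressed_resolvent_estimate_general {p : 𝒜} (ha : IsSelfAdjoint a)
    (hp : IsStarProjection p) (hz : z.im ≠ 0) :
    IsUnit (a - z • (1 : 𝒜)) ∧ IsUnit (p * a * p - z • (1 : 𝒜)) ∧
    ‖p * Ring.inverse (p * a * p - z • (1 : 𝒜)) - Ring.inverse (a - z • (1 : 𝒜))‖ ≤
      (1 + ‖p * a * (1 - p)‖ / |z.im|) * ‖(1 - p) * Ring.inverse (a - z • (1 : 𝒜))‖ := by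
  have hpa : IsSelfAdjoint (p * a * p) := ha.conjugate_self hp.isSelfAdjoint
  have ha_unit := isUnit_sub_smul_one_of_isSelfAdjoint ha hz
  have hpa_unit := isUnit_sub_smul_one_of_isSelfAdjoint hpa hz
  refine ⟨ha_unit, hpa_unit, ?_⟩
  refine (norm_mul_inverse_compression_sub_inverse_le hp.isIdempotentElem ha_unit hpa_unit).trans ?_
  rw [div_eq_inv_mul]
  gcongr
  exact norm_inverse_sub_smul_one_le_of_isSelfAdjoint hpa hz

end CStarAlgebra

/-- Quantitative resolvent estimate: for a bounded self-adjoint `A`, an orthogonal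
projection `P` and nonzero real `ω`, both `A - iω` and `P∘A∘P - iω` are invertible and the
compressed resolvent differs from the resolvent by at most
`(1 + ‖P∘A∘(I-P)‖/|ω|) * ‖(I-P)∘(A-iω)⁻¹‖`. -/
theorem compressed_resolvent_estimate
    {H : Type*} [NormedAddCommGroup H] [InnerProductSpace ℂ H] [CompleteSpace H]
    (A P : H →L[ℂ] H) (hA : IsSelfAdjoint A)
    (hP : IsSelfAdjoint P) (hP2 : P * P = P)
    (ω : ℝ) (hω : ω ≠ 0) :
    IsUnit (A - (Complex.I * ω) • (1 : H →L[ℂ] H)) ∧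
    IsUnit (P * A * P - (Complex.I * ω) • (1 : H →L[ℂ] H)) ∧
    ‖P * Ring.inverse (P * A * P - (Complex.I * ω) • (1 : H →L[ℂ] H))
        - Ring.inverse (A - (Complex.I * ω) • (1 : H →L[ℂ] H))‖
      ≤ (1 + ‖P * A * (1 - P)‖ / |ω|) *
          ‖(1 - P) * Ring.inverse (A - (Complex.I * ω) • (1 : H →L[ℂ] H))‖ := by
  simpa using compressed_resolvent_estimate_general (z := Complex.I * ω) hA ⟨hP2, hP⟩ (by simpa)
end

section
/- Let c, R > 0 and D ≥ 0 be real numbers, let ω ∈ ℝ, let m, k be natural numbers with m ≥ 1, and let λ : ℕ → ℝ be a sequence satisfying λ(n) ≥ n(n+1)/(c²R²) for all n ≥ m. Then ∑_{l=k+1}^∞ ∑_{n=m}^∞ (cR)² · (D + c·√(λ(n)))² / ( l(l+1) · (λ(n)² + ω²) ) ≤ ( (cR)² / √((k+1)·m) · ( c + c·R·D/√(m(m+1)) ) )². -/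
open scoped ENNReal

/-!
Fix `n ≥ m` and put `x = λ n`, `a = c R`. Since `x ≥ n(n+1)/a² ≥ m(m+1)/a²`, the constant `D` is
at most `(a D / √(m(m+1))) √x`, so `D + c √x ≤ (c + a D / √(m(m+1))) √x`. Squaring, dropping `ω²`
and bounding `1/x` by `a²/(n(n+1))` separates the variables `l` and `n`, and both of the remaining
series telescope.
-/

open Filter Topology

theorem hasSum_sub_succ_of_antitone {f : ℕ → ℝ} {L : ℝ} (hf : Antitone f)
    (hL : Tendsto f atTop (𝓝 L)) : HasSum (fun n ↦ f n - f (n + 1)) (f 0 - L) := by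
  rw [hasSum_iff_tendsto_nat_of_nonneg fun n ↦ sub_nonneg.2 (hf n.le_succ)]
  simp only [Finset.sum_range_sub']
  exact hL.const_sub (f 0)

theorem hasSum_one_div_add_mul_add_one {a : ℝ} (ha : 0 < a) :
    HasSum (fun n : ℕ ↦ 1 / ((n + a) * (n + a + 1))) (1 / a) := by
  have hanti : Antitone fun n : ℕ ↦ 1 / (n + a) := fun i j hij ↦ by dsimp only; gcongr
  have hlim : Tendsto (fun n : ℕ ↦ 1 / (n + a)) atTop (𝓝 0) :=
    (tendsto_atTop_add_const_right _ a tendsto_natCast_atTop_atTop).const_div_atTop 1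
  convert hasSum_sub_succ_of_antitone hanti hlim using 1
  · ext n
    push_cast
    field_simp
    ring
  · simp

theorem tsum_subtype_le_eq_tsum_nat_add {M : Type*} [AddCommMonoid M] [TopologicalSpace M]
    (f : ℕ → M) (m : ℕ) : ∑' n : {n : ℕ // m ≤ n}, f n = ∑' n, f (n + m) := by
  let e : {n : ℕ // m ≤ n} ≃ ℕ :=
    (Equiv.subtypeEquivRight (by simp)).trans (notMemRangeEquiv m)
  exact (e.symm.tsum_eq fun n ↦ f n).symm

theorem tsum_ofReal_one_div_mul_add_one {m : ℕ} (hm : 0 < m) :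
    ∑' n : {n : ℕ // m ≤ n}, ENNReal.ofReal (1 / ((n : ℝ) * ((n : ℝ) + 1)))
      = ENNReal.ofReal (1 / (m : ℝ)) := by
  have hsum := hasSum_one_div_add_mul_add_one (Nat.cast_pos (α := ℝ).2 hm)
  rw [tsum_subtype_le_eq_tsum_nat_add (fun n ↦ ENNReal.ofReal (1 / ((n : ℝ) * ((n : ℝ) + 1)))),
    ← hsum.tsum_eq, ENNReal.ofReal_tsum_of_nonneg (fun n ↦ by positivity) hsum.summable]
  push_cast
  rfl

section Pointwise

variable {c D x y : ℝ}

theorem add_mul_sqrt_le_mul_sqrt (hD : 0 ≤ D) (hy : 0 < y) (hyx : y ≤ x) :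
    D + c * √x ≤ (c + D / √y) * √x := by
  have hDx : D ≤ D / √y * √x := by
    rw [div_mul_eq_mul_div, le_div_iff₀ (Real.sqrt_pos.2 hy)]
    gcongr
  linarith

theorem sq_add_mul_sqrt_div_le (ω : ℝ) (hc : 0 ≤ c) (hD : 0 ≤ D) (hy : 0 < y) (hyx : y ≤ x) :
    (D + c * √x) ^ 2 / (x ^ 2 + ω ^ 2) ≤ (c + D / √y) ^ 2 / x := by
  have hx : 0 < x := hy.trans_le hyx
  calc (D + c * √x) ^ 2 / (x ^ 2 + ω ^ 2)
      ≤ ((c + D / √y) * √x) ^ 2 / x ^ 2 := by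
        gcongr
        · exact add_mul_sqrt_le_mul_sqrt hD hy hyx
        · exact le_add_of_nonneg_right (sq_nonneg ω)
    _ = (c + D / √y) ^ 2 / x := by
        rw [mul_pow, Real.sq_sqrt hx.le]
        field_simp

theorem sq_add_mul_sqrt_div_le_of_div_sq_le {a p q : ℝ} (ω : ℝ) (ha : 0 < a) (hc : 0 ≤ c)
    (hD : 0 ≤ D) (hq : 0 < q) (hqp : q ≤ p) (hpx : p / a ^ 2 ≤ x) :
    (D + c * √x) ^ 2 / (x ^ 2 + ω ^ 2) ≤ a ^ 2 * (c + a * D / √q) ^ 2 * (1 / p) := by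
  have hp : 0 < p := hq.trans_le hqp
  have hqx : q / a ^ 2 ≤ x := le_trans (by gcongr) hpx
  have hsqrt : D / √(q / a ^ 2) = a * D / √q := by
    rw [Real.sqrt_div hq.le, Real.sqrt_sq ha.le, div_div_eq_mul_div, mul_comm]
  calc (D + c * √x) ^ 2 / (x ^ 2 + ω ^ 2)
      ≤ (c + a * D / √q) ^ 2 / x := by
        rw [← hsqrt]
        exact sq_add_mul_sqrt_div_le ω hc hD (by positivity) hqx
    _ ≤ (c + a * D / √q) ^ 2 / (p / a ^ 2) := by gcongr
    _ = a ^ 2 * (c + a * D / √q) ^ 2 * (1 / p) := by field_simp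

end Pointwise

theorem tsum_ofReal_sq_add_mul_sqrt_div_le {a c D : ℝ} (ω : ℝ) (ha : 0 < a) (hc : 0 ≤ c)
    (hD : 0 ≤ D) {m : ℕ} (hm : 0 < m) {lam : ℕ → ℝ}
    (hlam : ∀ n : ℕ, m ≤ n → ((n : ℝ) * ((n : ℝ) + 1)) / a ^ 2 ≤ lam n) :
    ∑' n : {n : ℕ // m ≤ n}, ENNReal.ofReal ((D + c * √(lam n)) ^ 2 / (lam n ^ 2 + ω ^ 2))
      ≤ ENNReal.ofReal (a ^ 2 * (c + a * D / √((m : ℝ) * ((m : ℝ) + 1))) ^ 2 * (1 / (m : ℝ))) := by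
  set B := a ^ 2 * (c + a * D / √((m : ℝ) * ((m : ℝ) + 1))) ^ 2
  have hB : 0 ≤ B := by positivity
  have hterm (n : {n : ℕ // m ≤ n}) :
      (D + c * √(lam n)) ^ 2 / (lam n ^ 2 + ω ^ 2) ≤ B * (1 / ((n : ℝ) * ((n : ℝ) + 1))) := by
    have hmn : (m : ℝ) ≤ (n : ℕ) := Nat.cast_le.2 n.2
    exact sq_add_mul_sqrt_div_le_of_div_sq_le ω ha hc hD (by positivity) (by gcongr) (hlam n n.2)
  calc ∑' n : {n : ℕ // m ≤ n}, ENNReal.ofReal ((D + c * √(lam n)) ^ 2 / (lam n ^ 2 + ω ^ 2))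
      ≤ ∑' n : {n : ℕ // m ≤ n}, ENNReal.ofReal (B * (1 / ((n : ℝ) * ((n : ℝ) + 1)))) :=
        ENNReal.tsum_le_tsum fun n ↦ ENNReal.ofReal_le_ofReal (hterm n)
    _ = ENNReal.ofReal (B * (1 / (m : ℝ))) := by
        simp only [ENNReal.ofReal_mul hB, ENNReal.tsum_mul_left,
          tsum_ofReal_one_div_mul_add_one hm]

/-- The quantitative double-series estimate from the proof of Theorem 2 (case `|m| ≥ 1`):
if `λ n ≥ n(n+1)/(c²R²)` for `n ≥ m`, then the double sum over `l ≥ k+1`, `n ≥ m` of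
`(cR)²(D + c√(λ n))² / (l(l+1)(λ n² + ω²))` is bounded by
`((cR)²/√((k+1)m) · (c + cRD/√(m(m+1))))²`. -/
theorem double_series_resolvent_tail_estimate
    (c R D ω : ℝ) (hc : 0 < c) (hR : 0 < R) (hD : 0 ≤ D)
    (m k : ℕ) (hm : 1 ≤ m) (lam : ℕ → ℝ)
    (hlam : ∀ n : ℕ, m ≤ n → ((n : ℝ) * ((n : ℝ) + 1)) / (c ^ 2 * R ^ 2) ≤ lam n) :
    ∑' (l : {l : ℕ // k + 1 ≤ l}), ∑' (n : {n : ℕ // m ≤ n}),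
        ENNReal.ofReal ((c * R) ^ 2 * (D + c * Real.sqrt (lam n)) ^ 2 /
          (((l : ℝ) * ((l : ℝ) + 1)) * ((lam n) ^ 2 + ω ^ 2)))
      ≤ ENNReal.ofReal (((c * R) ^ 2 / Real.sqrt (((k : ℝ) + 1) * (m : ℝ)) *
          (c + c * R * D / Real.sqrt ((m : ℝ) * ((m : ℝ) + 1)))) ^ 2) := by
  have hsplit (l n : ℕ) :
      ENNReal.ofReal ((c * R) ^ 2 * (D + c * √(lam n)) ^ 2 /
          (((l : ℝ) * ((l : ℝ) + 1)) * (lam n ^ 2 + ω ^ 2)))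
        = ENNReal.ofReal ((c * R) ^ 2) * ENNReal.ofReal (1 / ((l : ℝ) * ((l : ℝ) + 1))) *
          ENNReal.ofReal ((D + c * √(lam n)) ^ 2 / (lam n ^ 2 + ω ^ 2)) := by
    rw [← ENNReal.ofReal_mul (by positivity), ← ENNReal.ofReal_mul (by positivity),
      mul_one_div, div_mul_div_comm]
  simp only [hsplit, ENNReal.tsum_mul_left, ENNReal.tsum_mul_right,
    tsum_ofReal_one_div_mul_add_one k.succ_pos]
  simp only [← mul_pow] at hlam
  grw [tsum_ofReal_sq_add_mul_sqrt_div_le ω (mul_pos hc hR) hc.le hD hm hlam]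
  rw [← ENNReal.ofReal_mul (by positivity), ← ENNReal.ofReal_mul (by positivity),
    mul_pow (_ / _), div_pow, Real.sq_sqrt (by positivity)]
  refine ENNReal.ofReal_le_ofReal (le_of_eq ?_)
  push_cast
  field_simp
end
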